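/- Let a, b, c ∈ ℂ. If 2b − c = 2, then the linear span of {v_i^-, v_i^{+−} : i ∈ ℤ} is a 𝔤-submodule of R_{a,b,c}. If 2b + c = 2, then the linear span of {v_i^+, v_i^{+−} + 2(a+i)v_i : i ∈ ℤ} is a 𝔤-submodule of R_{a,b,c}. -/

import Mathlib

open Submodule

/-- A module over the `N = 2` Ramond algebra `𝔤`: a `ℤ/2`-graded complex vector
space `V = even ⊕ odd` with parity-preserving operators `L m`, `H m`,
parity-reversing operators `Gp m` (`G_m^+`), `Gm m` (`G_m^-`), and a scalar `c₀`
(the action of the central element `C`), subject to the defining relations. -/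
structure RamondRep (V : Type) [AddCommGroup V] [Module ℂ V] : Type where
  L : ℤ → V →ₗ[ℂ] V
  H : ℤ → V →ₗ[ℂ] V
  Gp : ℤ → V →ₗ[ℂ] V
  Gm : ℤ → V →ₗ[ℂ] V
  c₀ : ℂ
  even : Submodule ℂ V
  odd : Submodule ℂ V
  grading : IsCompl even odd
  L_even : ∀ (m : ℤ), ∀ v ∈ even, L m v ∈ even
  L_odd : ∀ (m : ℤ), ∀ v ∈ odd, L m v ∈ odd
  H_even : ∀ (m : ℤ), ∀ v ∈ even, H m v ∈ even
  H_odd : ∀ (m : ℤ), ∀ v ∈ odd, H m v ∈ odd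
  Gp_even : ∀ (m : ℤ), ∀ v ∈ even, Gp m v ∈ odd
  Gp_odd : ∀ (m : ℤ), ∀ v ∈ odd, Gp m v ∈ even
  Gm_even : ∀ (m : ℤ), ∀ v ∈ even, Gm m v ∈ odd
  Gm_odd : ∀ (m : ℤ), ∀ v ∈ odd, Gm m v ∈ even
  rel_LL : ∀ (m n : ℤ) (v : V),
    L m (L n v) - L n (L m v) =
      ((n : ℂ) - (m : ℂ)) • L (m + n) v +
        ((1 / 12 : ℂ) * ((n : ℂ) ^ 3 - (n : ℂ)) *
          (if m + n = 0 then (1 : ℂ) else 0) * c₀) • v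
  rel_HH : ∀ (m n : ℤ) (v : V),
    H m (H n v) - H n (H m v) =
      ((1 / 3 : ℂ) * (m : ℂ) * (if m + n = 0 then (1 : ℂ) else 0) * c₀) • v
  rel_LH : ∀ (m n : ℤ) (v : V),
    L m (H n v) - H n (L m v) = (n : ℂ) • H (m + n) v
  rel_LGp : ∀ (m p : ℤ) (v : V),
    L m (Gp p v) - Gp p (L m v) = ((p : ℂ) - (m : ℂ) / 2) • Gp (p + m) v
  rel_LGm : ∀ (m p : ℤ) (v : V),
    L m (Gm p v) - Gm p (L m v) = ((p : ℂ) - (m : ℂ) / 2) • Gm (p + m) v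
  rel_HGp : ∀ (m p : ℤ) (v : V),
    H m (Gp p v) - Gp p (H m v) = Gp (m + p) v
  rel_HGm : ∀ (m p : ℤ) (v : V),
    H m (Gm p v) - Gm p (H m v) = -(Gm (m + p) v)
  rel_GpGm : ∀ (p q : ℤ) (v : V),
    Gp p (Gm q v) + Gm q (Gp p v) =
      (-2 : ℂ) • L (p + q) v + ((p : ℂ) - (q : ℂ)) • H (p + q) v +
        ((1 / 3 : ℂ) * ((p : ℂ) ^ 2 - 1 / 4) *
          (if p + q = 0 then (1 : ℂ) else 0) * c₀) • v
  rel_GpGp : ∀ (p q : ℤ) (v : V), Gp p (Gp q v) + Gp q (Gp p v) = 0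
  rel_GmGm : ∀ (p q : ℤ) (v : V), Gm p (Gm q v) + Gm q (Gm p v) = 0

namespace RamondRep

variable {V : Type} [AddCommGroup V] [Module ℂ V]

/-- The weight space `V_μ = {v ∈ V : L₀ v = μ v}`. -/
def wt (ρ : RamondRep V) (μ : ℂ) : Submodule ℂ V :=
  Module.End.eigenspace (ρ.L 0) μ

/-- The parity components, indexed by `ZMod 2`. -/
def parity (ρ : RamondRep V) (τ : ZMod 2) : Submodule ℂ V :=
  if τ = 0 then ρ.even else ρ.odd

/-- `V` is a weight module: it is the sum of its weight spaces. -/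
def IsWeight (ρ : RamondRep V) : Prop := (⨆ μ : ℂ, ρ.wt μ) = ⊤

/-- `V` is cuspidal: a weight module with uniformly bounded weight multiplicities
in each parity. -/
def Cuspidal (ρ : RamondRep V) : Prop :=
  ρ.IsWeight ∧ ∃ p : ℕ, ∀ (μ : ℂ) (τ : ZMod 2),
    Module.rank ℂ ↥(ρ.wt μ ⊓ ρ.parity τ) ≤ (p : Cardinal)

/-- A subspace invariant under all the operators. -/
def IsSubmod (ρ : RamondRep V) (W : Submodule ℂ V) : Prop :=
  (∀ (m : ℤ), ∀ v ∈ W, ρ.L m v ∈ W) ∧ (∀ (m : ℤ), ∀ v ∈ W, ρ.H m v ∈ W) ∧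
    (∀ (m : ℤ), ∀ v ∈ W, ρ.Gp m v ∈ W) ∧ (∀ (m : ℤ), ∀ v ∈ W, ρ.Gm m v ∈ W)

/-- A graded subspace invariant under all the operators. -/
def IsGradedSubmod (ρ : RamondRep V) (W : Submodule ℂ V) : Prop :=
  ρ.IsSubmod W ∧ W = (W ⊓ ρ.even) ⊔ (W ⊓ ρ.odd)

/-- The trivial representation: all operators act by zero. -/
def IsTrivialRep (ρ : RamondRep V) : Prop :=
  ∀ (m : ℤ) (v : V), ρ.L m v = 0 ∧ ρ.H m v = 0 ∧ ρ.Gp m v = 0 ∧ ρ.Gm m v = 0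

/-- `V` is simple: nontrivial, and its only graded submodules are `⊥` and `⊤`. -/
def IsSimple (ρ : RamondRep V) : Prop :=
  ¬ ρ.IsTrivialRep ∧
    ∀ W : Submodule ℂ V, ρ.IsGradedSubmod W → W = ⊥ ∨ W = ⊤

/-- `V` is generated by `v` as a `𝔤`-module. -/
def GeneratedBy (ρ : RamondRep V) (v : V) : Prop :=
  ∀ W : Submodule ℂ V, ρ.IsSubmod W → v ∈ W → W = ⊤

/-- `V` is a highest weight module. -/
def IsHighestWeight (ρ : RamondRep V) : Prop :=
  ∃ v : V, v ≠ 0 ∧ ρ.GeneratedBy v ∧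
    (∃ h h' : ℂ, ρ.L 0 v = h • v ∧ ρ.H 0 v = h' • v) ∧
    (∀ m : ℤ, 0 < m → ρ.L m v = 0 ∧ ρ.H m v = 0 ∧ ρ.Gp m v = 0 ∧ ρ.Gm m v = 0) ∧
    ρ.Gp 0 v = 0

/-- `V` is a lowest weight module. -/
def IsLowestWeight (ρ : RamondRep V) : Prop :=
  ∃ v : V, v ≠ 0 ∧ ρ.GeneratedBy v ∧
    (∃ h h' : ℂ, ρ.L 0 v = h • v ∧ ρ.H 0 v = h' • v) ∧
    (∀ m : ℤ, m < 0 → ρ.L m v = 0 ∧ ρ.H m v = 0 ∧ ρ.Gp m v = 0 ∧ ρ.Gm m v = 0) ∧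
    ρ.Gm 0 v = 0

end RamondRep

/-- The families `(u i)ᵢ, (upm i)ᵢ` (even, `upm = v^{+-}`) and `(up i)ᵢ, (um i)ᵢ`
(odd) realize the `𝔤`-module `R_{a,b,c}` inside `(W, σ)`: together they form a
basis, spanning the even/odd parts as indicated, `c₀ = 0`, and the action is given
by the `R_{a,b,c}` formulas. -/
def RamondRep.IsRabc {W : Type} [AddCommGroup W] [Module ℂ W] (σ : RamondRep W)
    (u upm up um : ℤ → W) (a b c : ℂ) : Prop :=
  σ.c₀ = 0 ∧
  LinearIndependent ℂ (fun x : (Bool × Bool) × ℤ =>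
    if x.1.1 then (if x.1.2 then um x.2 else up x.2)
    else (if x.1.2 then upm x.2 else u x.2)) ∧
  Submodule.span ℂ
    (Set.range u ∪ Set.range upm ∪ Set.range up ∪ Set.range um) = ⊤ ∧
  σ.even = Submodule.span ℂ (Set.range u ∪ Set.range upm) ∧
  σ.odd = Submodule.span ℂ (Set.range up ∪ Set.range um) ∧
  (∀ m i : ℤ, σ.L m (u i) = (a + (i : ℂ) + b * (m : ℂ)) • u (m + i)) ∧
  (∀ m k : ℤ, σ.L m (up k) = (a + (k : ℂ) + (b - 1 / 2) * (m : ℂ)) • up (m + k)) ∧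
  (∀ m k : ℤ, σ.L m (um k) = (a + (k : ℂ) + (b - 1 / 2) * (m : ℂ)) • um (m + k)) ∧
  (∀ m i : ℤ, σ.L m (upm i) = (a + (i : ℂ) + (b - 1) * (m : ℂ)) • upm (m + i) +
    ((1 / 2 : ℂ) * (2 * b - c - 2) * (m : ℂ) ^ 2) • u (i + m)) ∧
  (∀ m i : ℤ, σ.H m (u i) = c • u (m + i)) ∧
  (∀ m k : ℤ, σ.H m (up k) = (c + 1) • up (m + k)) ∧
  (∀ m k : ℤ, σ.H m (um k) = (c - 1) • um (m + k)) ∧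
  (∀ m i : ℤ, σ.H m (upm i) = c • upm (m + i) -
    ((m : ℂ) * (2 * b - c - 2)) • u (m + i)) ∧
  (∀ r i : ℤ, σ.Gp r (u i) = up (r + i)) ∧
  (∀ r i : ℤ, σ.Gm r (u i) = um (r + i)) ∧
  (∀ r i : ℤ, σ.Gp r (up i) = 0) ∧
  (∀ r i : ℤ, σ.Gm r (um i) = 0) ∧
  (∀ r k : ℤ, σ.Gp r (um k) = upm (k + r) +
    ((c + 2 - 2 * b) * (r : ℂ)) • u (k + r)) ∧
  (∀ r k : ℤ, σ.Gm r (up k) = -upm (r + k) -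
    ((2 * a + 2 * (k : ℂ) + (2 * b + c) * (r : ℂ))) • u (k + r)) ∧
  (∀ r i : ℤ, σ.Gm r (upm i) =
    (-(2 * a + 2 * (i : ℂ) + (2 * b + c - 2) * (r : ℂ))) • um (r + i)) ∧
  (∀ r i : ℤ, σ.Gp r (upm i) = ((2 * b - c - 2) * (r : ℂ)) • up (r + i))

/-!
Let `X` be a graded subspace stable under all `L_m`, `H_m`, `G_m^-` on which every product
`G_p^+ G_q^+` vanishes. Moving `L_m`, `H_m` or `G_m^-` past one `G_r^+` by the commutation relations
shows that `X + ∑ r, G_r^+ X` is a submodule. If `X` is spanned by a family with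
`G_r^+ x_i = y_{i+r}`, then `y_j = G_p^+ x_{j-p}` for every `p`, so
`G_p^+ y_j = (G_p^+)² x_{j-p} = 0` and the products vanish.

When `2b - c = 2` this applies to `x = v^-`, `y = v^{+-}`. The case `2b + c = 2` is its image under
the symmetry exchanging `G^+` and `G^-`, with `x = v^+` and `y_i = v_i^{+-} + 2(a+i)v_i`.
-/

namespace RamondRep

variable {V : Type} [AddCommGroup V] [Module ℂ V] (ρ : RamondRep V)

/-- A subspace is graded when it is the sum of its even and odd parts. This is the grading clause
of `IsGradedSubmod`, isolated so that it applies to subspaces that are not submodules. -/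
def IsGraded (X : Submodule ℂ V) : Prop := X = (X ⊓ ρ.even) ⊔ (X ⊓ ρ.odd)

/-- The subspace `X + ∑ r, G_r^+ X`, a candidate for the submodule generated by `X`. -/
def gpExtension (X : Submodule ℂ V) : Submodule ℂ V := X ⊔ ⨆ r, X.map (ρ.Gp r)

variable {ρ} {X : Submodule ℂ V}

theorem isGraded_iff_le : ρ.IsGraded X ↔ X ≤ (X ⊓ ρ.even) ⊔ (X ⊓ ρ.odd) :=
  ⟨le_of_eq, fun h => h.antisymm (sup_le inf_le_left inf_le_left)⟩

theorem isGraded_span {S : Set V} (hS : ∀ s ∈ S, s ∈ ρ.even ∨ s ∈ ρ.odd) :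
    ρ.IsGraded (span ℂ S) := by
  refine isGraded_iff_le.2 (span_le.2 fun s hs => ?_)
  rcases hS s hs with heven | hodd
  · exact mem_sup_left ⟨subset_span hs, heven⟩
  · exact mem_sup_right ⟨subset_span hs, hodd⟩

theorem le_gpExtension : X ≤ ρ.gpExtension X := le_sup_left

theorem map_Gp_le_gpExtension (r : ℤ) : X.map (ρ.Gp r) ≤ ρ.gpExtension X :=
  (le_iSup (fun r => X.map (ρ.Gp r)) r).trans le_sup_right

theorem Gp_mem_gpExtension (r : ℤ) {x : V} (hx : x ∈ X) : ρ.Gp r x ∈ ρ.gpExtension X :=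
  map_Gp_le_gpExtension r (mem_map_of_mem hx)

theorem gpExtension_le_iff {Z : Submodule ℂ V} :
    ρ.gpExtension X ≤ Z ↔ X ≤ Z ∧ ∀ r, ∀ x ∈ X, ρ.Gp r x ∈ Z := by
  simp only [gpExtension, sup_le_iff, iSup_le_iff, map_le_iff_le_comap]
  rfl

theorem IsGraded.gpExtension (hX : ρ.IsGraded X) : ρ.IsGraded (ρ.gpExtension X) := by
  refine isGraded_iff_le.2 (gpExtension_le_iff.2 ⟨?_, fun r x hx => ?_⟩)
  · exact hX.le.trans (sup_le_sup (inf_le_inf_right _ le_gpExtension)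
      (inf_le_inf_right _ le_gpExtension))
  · obtain ⟨e, he, o, ho, rfl⟩ := mem_sup.1 (hX.le hx)
    rw [map_add, add_comm]
    exact add_mem_sup ⟨Gp_mem_gpExtension r ho.1, ρ.Gp_odd r o ho.2⟩
      ⟨Gp_mem_gpExtension r he.1, ρ.Gp_even r e he.2⟩

theorem L_mem_gpExtension {m : ℤ} (hL : ∀ x ∈ X, ρ.L m x ∈ X) :
    ∀ v ∈ ρ.gpExtension X, ρ.L m v ∈ ρ.gpExtension X := by
  refine gpExtension_le_iff (Z := (ρ.gpExtension X).comap (ρ.L m)).2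
    ⟨fun x hx => le_gpExtension (hL x hx), fun r x hx => ?_⟩
  rw [mem_comap, sub_eq_iff_eq_add.1 (ρ.rel_LGp m r x)]
  exact add_mem (smul_mem _ _ (Gp_mem_gpExtension _ hx)) (Gp_mem_gpExtension r (hL x hx))

theorem H_mem_gpExtension {m : ℤ} (hH : ∀ x ∈ X, ρ.H m x ∈ X) :
    ∀ v ∈ ρ.gpExtension X, ρ.H m v ∈ ρ.gpExtension X := by
  refine gpExtension_le_iff (Z := (ρ.gpExtension X).comap (ρ.H m)).2
    ⟨fun x hx => le_gpExtension (hH x hx), fun r x hx => ?_⟩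
  rw [mem_comap, sub_eq_iff_eq_add.1 (ρ.rel_HGp m r x)]
  exact add_mem (Gp_mem_gpExtension _ hx) (Gp_mem_gpExtension r (hH x hx))

theorem Gp_mem_gpExtension_of_Gp_Gp_eq_zero {m : ℤ}
    (hGpGp : ∀ r, ∀ x ∈ X, ρ.Gp m (ρ.Gp r x) = 0) :
    ∀ v ∈ ρ.gpExtension X, ρ.Gp m v ∈ ρ.gpExtension X := by
  refine gpExtension_le_iff (Z := (ρ.gpExtension X).comap (ρ.Gp m)).2
    ⟨fun x hx => Gp_mem_gpExtension m hx, fun r x hx => ?_⟩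
  rw [mem_comap, hGpGp r x hx]
  exact zero_mem _

theorem Gm_mem_gpExtension {m : ℤ} (hL : ∀ n, ∀ x ∈ X, ρ.L n x ∈ X)
    (hH : ∀ n, ∀ x ∈ X, ρ.H n x ∈ X) (hGm : ∀ x ∈ X, ρ.Gm m x ∈ X) :
    ∀ v ∈ ρ.gpExtension X, ρ.Gm m v ∈ ρ.gpExtension X := by
  refine gpExtension_le_iff (Z := (ρ.gpExtension X).comap (ρ.Gm m)).2
    ⟨fun x hx => le_gpExtension (hGm x hx), fun r x hx => ?_⟩
  have anticommutator_mem : ρ.Gp r (ρ.Gm m x) + ρ.Gm m (ρ.Gp r x) ∈ X := by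
    rw [ρ.rel_GpGm r m x]
    exact add_mem (add_mem (smul_mem _ _ (hL _ x hx)) (smul_mem _ _ (hH _ x hx)))
      (smul_mem _ _ hx)
  exact (add_mem_cancel_left (Gp_mem_gpExtension r (hGm x hx))).1
    (le_gpExtension anticommutator_mem)

theorem isGradedSubmod_gpExtension (hX : ρ.IsGraded X) (hL : ∀ m, ∀ x ∈ X, ρ.L m x ∈ X)
    (hH : ∀ m, ∀ x ∈ X, ρ.H m x ∈ X) (hGm : ∀ m, ∀ x ∈ X, ρ.Gm m x ∈ X)
    (hGpGp : ∀ p q, ∀ x ∈ X, ρ.Gp p (ρ.Gp q x) = 0) :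
    ρ.IsGradedSubmod (ρ.gpExtension X) :=
  ⟨⟨fun m => L_mem_gpExtension (hL m), fun m => H_mem_gpExtension (hH m),
    fun m => Gp_mem_gpExtension_of_Gp_Gp_eq_zero (hGpGp m),
    fun m => Gm_mem_gpExtension hL hH (hGm m)⟩, hX.gpExtension⟩

theorem Gp_Gp_self (p : ℤ) (v : V) : ρ.Gp p (ρ.Gp p v) = 0 := by
  simpa only [← two_smul ℂ, smul_eq_zero_iff_right (two_ne_zero' ℂ)] using ρ.rel_GpGp p p v

section ShiftedFamily

variable {x y : ℤ → V}

theorem gpExtension_span_range (hGp : ∀ r i, ρ.Gp r (x i) = y (i + r)) :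
    ρ.gpExtension (span ℂ (Set.range x)) = span ℂ (Set.range x ∪ Set.range y) := by
  refine le_antisymm (gpExtension_le_iff.2 ⟨span_mono Set.subset_union_left, fun r => ?_⟩)
    (span_le.2 (Set.union_subset (span_le.1 le_gpExtension) ?_))
  · refine span_le (p := (span ℂ (Set.range x ∪ Set.range y)).comap (ρ.Gp r)).2 ?_
    rintro _ ⟨i, rfl⟩
    exact subset_span (Or.inr ⟨i + r, (hGp r i).symm⟩)
  · rintro _ ⟨i, rfl⟩
    rw [← add_zero i, ← hGp]
    exact Gp_mem_gpExtension 0 (subset_span ⟨i, rfl⟩)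

theorem Gp_Gp_eq_zero_of_mem_span_range (hGp : ∀ r i, ρ.Gp r (x i) = y (i + r)) (p q : ℤ) :
    ∀ v ∈ span ℂ (Set.range x), ρ.Gp p (ρ.Gp q v) = 0 := by
  refine span_le (p := LinearMap.ker (ρ.Gp p ∘ₗ ρ.Gp q)).2 ?_
  rintro _ ⟨i, rfl⟩
  calc ρ.Gp p (ρ.Gp q (x i)) = ρ.Gp p (ρ.Gp p (x (i + q - p))) := by
        rw [hGp, hGp, sub_add_cancel]
    _ = 0 := Gp_Gp_self p _

theorem isGradedSubmod_span_range_union (hx : ∀ i, x i ∈ ρ.even ∨ x i ∈ ρ.odd)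
    (hL : ∀ m i, ρ.L m (x i) ∈ span ℂ (Set.range x))
    (hH : ∀ m i, ρ.H m (x i) ∈ span ℂ (Set.range x))
    (hGm : ∀ m i, ρ.Gm m (x i) ∈ span ℂ (Set.range x))
    (hGp : ∀ r i, ρ.Gp r (x i) = y (i + r)) :
    ρ.IsGradedSubmod (span ℂ (Set.range x ∪ Set.range y)) := by
  have stable {f : V →ₗ[ℂ] V} (hf : ∀ i, f (x i) ∈ span ℂ (Set.range x)) :
      ∀ v ∈ span ℂ (Set.range x), f v ∈ span ℂ (Set.range x) :=
    span_le (p := (span ℂ (Set.range x)).comap f).2 (Set.range_subset_iff.2 hf)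
  rw [← gpExtension_span_range hGp]
  exact isGradedSubmod_gpExtension (isGraded_span (Set.forall_mem_range.2 hx))
    (fun m => stable (hL m)) (fun m => stable (hH m)) (fun m => stable (hGm m))
    (Gp_Gp_eq_zero_of_mem_span_range hGp)

end ShiftedFamily

variable (ρ) in
/-- The twist of a representation by the automorphism `L ↦ L`, `H ↦ -H`, `G^± ↦ -G^∓` of `𝔤`,
which reduces statements about `G^-` to statements about `G^+`. The sign on `G^±` is optional, as
the relations are even in `G^±`; it absorbs the one in `G_r^- v_k^+ = -v_{r+k}^{+-} - ⋯`. -/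
def mirror : RamondRep V where
  L := ρ.L
  H m := -ρ.H m
  Gp m := -ρ.Gm m
  Gm m := -ρ.Gp m
  c₀ := ρ.c₀
  even := ρ.even
  odd := ρ.odd
  grading := ρ.grading
  L_even := ρ.L_even
  L_odd := ρ.L_odd
  H_even m v hv := neg_mem (ρ.H_even m v hv)
  H_odd m v hv := neg_mem (ρ.H_odd m v hv)
  Gp_even m v hv := neg_mem (ρ.Gm_even m v hv)
  Gp_odd m v hv := neg_mem (ρ.Gm_odd m v hv)
  Gm_even m v hv := neg_mem (ρ.Gp_even m v hv)
  Gm_odd m v hv := neg_mem (ρ.Gp_odd m v hv)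
  rel_LL := ρ.rel_LL
  rel_HH m n v := by simpa using ρ.rel_HH m n v
  rel_LH m n v := by
    simp only [LinearMap.neg_apply, map_neg]
    linear_combination (norm := module) -ρ.rel_LH m n v
  rel_LGp m p v := by
    simp only [LinearMap.neg_apply, map_neg]
    linear_combination (norm := module) -ρ.rel_LGm m p v
  rel_LGm m p v := by
    simp only [LinearMap.neg_apply, map_neg]
    linear_combination (norm := module) -ρ.rel_LGp m p v
  rel_HGp m p v := by simpa using ρ.rel_HGm m p v
  rel_HGm m p v := by simpa using ρ.rel_HGp m p v
  rel_GpGm p q v := by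
    have central : ((q : ℂ) ^ 2 - 1 / 4) * (if q + p = 0 then 1 else 0) =
        ((p : ℂ) ^ 2 - 1 / 4) * (if p + q = 0 then 1 else 0) := by
      rw [add_comm q p]
      split_ifs with hpq
      · rw [eq_neg_of_add_eq_zero_right hpq, Int.cast_neg, neg_sq]
      · simp only [mul_zero]
    have swapped := ρ.rel_GpGm q p v
    rw [mul_assoc (1 / 3 : ℂ), central, add_comm q p] at swapped
    simp only [LinearMap.neg_apply, map_neg]
    linear_combination (norm := module) swapped
  rel_GpGp p q v := by simpa using ρ.rel_GmGm p q v
  rel_GmGm p q v := by simpa using ρ.rel_GpGp p q v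

theorem isGradedSubmod_mirror : ρ.mirror.IsGradedSubmod X ↔ ρ.IsGradedSubmod X := by
  simp only [IsGradedSubmod, IsSubmod, mirror, LinearMap.neg_apply, neg_mem_iff,
    and_comm (a := ∀ m : ℤ, ∀ v ∈ X, ρ.Gm m v ∈ X)]

section IsRabc

variable {u upm up um : ℤ → V} {a b c : ℂ}

theorem IsRabc.Gp_um_of_two_mul_sub_eq_two (h : ρ.IsRabc u upm up um a b c)
    (hbc : 2 * b - c = 2) (r i : ℤ) : ρ.Gp r (um i) = upm (i + r) := by
  obtain ⟨-, -, -, -, -, -, -, -, -, -, -, -, -, -, -, -, -, hGp_um, -, -, -⟩ := h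
  obtain rfl : c = 2 * b - 2 := by linear_combination -hbc
  rw [hGp_um]
  module

theorem IsRabc.Gm_up_of_two_mul_add_eq_two (h : ρ.IsRabc u upm up um a b c)
    (hbc : 2 * b + c = 2) (r i : ℤ) :
    ρ.Gm r (up i) = -(upm (i + r) + (2 * (a + ((i + r : ℤ) : ℂ))) • u (i + r)) := by
  obtain ⟨-, -, -, -, -, -, -, -, -, -, -, -, -, -, -, -, -, -, hGm_up, -, -⟩ := h
  rw [hGm_up, hbc, add_comm r i]
  push_cast
  module

end IsRabc

end RamondRep

/-- in `R_{a,b,c}`, if `2b - c = 2` then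
`span {v_i^-, v_i^{+-}}` is a `𝔤`-submodule, and if `2b + c = 2` then
`span {v_i^+, v_i^{+-} + 2(a+i) v_i}` is a `𝔤`-submodule. -/
theorem stmt17 (a b c : ℂ) {W : Type} [AddCommGroup W] [Module ℂ W]
    (σ : RamondRep W) (u upm up um : ℤ → W)
    (hRabc : σ.IsRabc u upm up um a b c) :
    (2 * b - c = 2 →
      σ.IsGradedSubmod (Submodule.span ℂ (Set.range um ∪ Set.range upm))) ∧
    (2 * b + c = 2 →
      σ.IsGradedSubmod (Submodule.span ℂ (Set.range up ∪
        Set.range (fun i : ℤ => upm i + (2 * (a + (i : ℂ))) • u i)))) := by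
  have hGp_um := hRabc.Gp_um_of_two_mul_sub_eq_two
  have hGm_up := hRabc.Gm_up_of_two_mul_add_eq_two
  obtain ⟨-, -, -, -, hodd, -, hL_up, hL_um, -, -, hH_up, hH_um, -, -, -, hGp_up, hGm_um, -⟩ :=
    hRabc
  have smul_mem_span (x : ℤ → W) (t : ℂ) (i : ℤ) : t • x i ∈ span ℂ (Set.range x) :=
    smul_mem _ t (subset_span ⟨i, rfl⟩)
  constructor <;> intro hbc
  · exact RamondRep.isGradedSubmod_span_range_union
      (fun i => .inr (hodd.symm ▸ subset_span (.inr ⟨i, rfl⟩)))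
      (fun m i => (hL_um m i).symm ▸ smul_mem_span um _ _)
      (fun m i => (hH_um m i).symm ▸ smul_mem_span um _ _)
      (fun m i => (hGm_um m i).symm ▸ zero_mem _)
      (hGp_um hbc)
  · exact RamondRep.isGradedSubmod_mirror.1 <| RamondRep.isGradedSubmod_span_range_union
      (fun i => .inr (hodd.symm ▸ subset_span (.inl ⟨i, rfl⟩)))
      (fun m i => (hL_up m i).symm ▸ smul_mem_span up _ _)
      (fun m i => neg_mem ((hH_up m i).symm ▸ smul_mem_span up _ _))
      (fun m i => neg_mem ((hGp_up m i).symm ▸ zero_mem _))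
      (fun r i => neg_eq_iff_eq_neg.2 (hGm_up hbc r i))
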